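/- Every language L in trPCCFL ∪ shuffleCFL satisfies the concatenation-pumping condition; that is, there exists a constant N such that for every word w ∈ L with |w| > N there exist words x, y, z, s, t such that (1) w = x·y·z, (2) 1 ≤ |s·t| ≤ N, and (3) x·s^m·y·t^m·z ∈ L for all m ≥ 0. -/

import Mathlib

/-- `IsInterleaving w v u` means `u` is an interleaving of `w` and `v`. -/
inductive IsInterleaving {α : Type} : List α → List α → List α → Prop
  | nil : IsInterleaving [] [] []
  | left {a : α} {w v u : List α} : IsInterleaving w v u → IsInterleaving (a :: w) v (a :: u)
  | right {a : α} {w v u : List α} : IsInterleaving w v u → IsInterleaving w (a :: v) (a :: u)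

/-- Shuffle of two languages. -/
def shuffleLang {α : Type} (L K : Set (List α)) : Set (List α) :=
  {u | ∃ w ∈ L, ∃ v ∈ K, IsInterleaving w v u}

/-- A partially-commutative context-free grammar in Greibach form. -/
structure PCGrammar (α : Type) : Type 1 where
  V : Type
  finV : Finite V
  start : V
  prods : Set (V × α × List V)
  finP : prods.Finite
  indep : V → V → Prop
  indep_symm : ∀ {X Y : V}, indep X Y → indep Y X
  indep_irrefl : ∀ X : V, ¬ indep X X

/-- `PCDerives G γ w` : configuration `γ` derives the empty configuration producing word `w`,
using production steps (at the head) and swap steps of independent adjacent nonterminals. -/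
inductive PCDerives {α : Type} (G : PCGrammar α) : List G.V → List α → Prop
  | nil : PCDerives G [] []
  | prod {X : G.V} {a : α} {γ β : List G.V} {w : List α} :
      (X, a, γ) ∈ G.prods → PCDerives G (γ ++ β) w → PCDerives G (X :: β) (a :: w)
  | swap {η β : List G.V} {X Y : G.V} {w : List α} :
      G.indep X Y → PCDerives G (η ++ Y :: X :: β) w → PCDerives G (η ++ X :: Y :: β) w

/-- The language generated by a PC-grammar. -/
def PCGrammar.lang {α : Type} (G : PCGrammar α) : Set (List α) :=
  {w | PCDerives G [G.start] w}

/-- The class of partially-commutative context-free languages. -/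
def IsPCCFL {α : Type} (L : Set (List α)) : Prop :=
  ∃ G : PCGrammar α, G.lang = L

/-- The dependence relation (complement of independence) is transitive. -/
def PCGrammar.depTransitive {α : Type} (G : PCGrammar α) : Prop :=
  ∀ X Y Z : G.V, ¬ G.indep X Y → ¬ G.indep Y Z → ¬ G.indep X Z

/-- The subclass of PCCFL given by grammars with transitive dependence. -/
def IsTrPCCFL {α : Type} (L : Set (List α)) : Prop :=
  ∃ G : PCGrammar α, G.depTransitive ∧ G.lang = L

/-- Terms of a PA-grammar (shuffle context-free grammar). -/
inductive PATerm (V : Type) : Type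
  | eps : PATerm V
  | var (X : V) : PATerm V
  | seq (t u : PATerm V) : PATerm V
  | par (t u : PATerm V) : PATerm V

/-- Structural equivalence of PA-terms: associativity of both compositions,
commutativity of parallel composition, and neutrality of the empty term. -/
inductive PAEq {V : Type} : PATerm V → PATerm V → Prop
  | refl (t : PATerm V) : PAEq t t
  | symm {t u : PATerm V} : PAEq t u → PAEq u t
  | trans {t u v : PATerm V} : PAEq t u → PAEq u v → PAEq t v
  | seq_assoc (t u v : PATerm V) : PAEq ((t.seq u).seq v) (t.seq (u.seq v))
  | par_assoc (t u v : PATerm V) : PAEq ((t.par u).par v) (t.par (u.par v))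
  | par_comm (t u : PATerm V) : PAEq (t.par u) (u.par t)
  | seq_eps_left (t : PATerm V) : PAEq (PATerm.eps.seq t) t
  | seq_eps_right (t : PATerm V) : PAEq (t.seq PATerm.eps) t
  | par_eps (t : PATerm V) : PAEq (t.par PATerm.eps) t
  | seq_congr {t t' u u' : PATerm V} : PAEq t t' → PAEq u u' → PAEq (t.seq u) (t'.seq u')
  | par_congr {t t' u u' : PATerm V} : PAEq t t' → PAEq u u' → PAEq (t.par u) (t'.par u')

/-- Single steps of a PA-grammar with production set `P`. -/
inductive PAStep {V α : Type} (P : Set (V × α × PATerm V)) : PATerm V → α → PATerm V → Prop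
  | prod {X : V} {a : α} {t : PATerm V} : (X, a, t) ∈ P → PAStep P (PATerm.var X) a t
  | seq_left {t t' u : PATerm V} {a : α} : PAStep P t a t' → PAStep P (t.seq u) a (t'.seq u)
  | par_left {t t' u : PATerm V} {a : α} : PAStep P t a t' → PAStep P (t.par u) a (t'.par u)
  | par_right {t u u' : PATerm V} {a : α} : PAStep P u a u' → PAStep P (t.par u) a (t.par u')

/-- `PAGen P t w` : term `t` derives the empty term producing word `w`
(terms are considered up to structural equivalence). -/
inductive PAGen {V α : Type} (P : Set (V × α × PATerm V)) : PATerm V → List α → Prop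
  | done : PAGen P PATerm.eps []
  | eqv {t t' : PATerm V} {w : List α} : PAEq t t' → PAGen P t' w → PAGen P t w
  | step {t t' : PATerm V} {a : α} {w : List α} :
      PAStep P t a t' → PAGen P t' w → PAGen P t (a :: w)

/-- A PA-grammar (shuffle context-free grammar). -/
structure PAGrammar (α : Type) : Type 1 where
  V : Type
  finV : Finite V
  start : V
  prods : Set (V × α × PATerm V)
  finP : prods.Finite

/-- The language generated by a PA-grammar. -/
def PAGrammar.lang {α : Type} (G : PAGrammar α) : Set (List α) :=
  {w | PAGen G.prods (PATerm.var G.start) w}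

/-- The class of languages of PA-grammars (context-free grammars with shuffle). -/
def IsShuffleCFL {α : Type} (L : Set (List α)) : Prop :=
  ∃ G : PAGrammar α, G.lang = L

/-- A single swap of two adjacent letters independent according to `J`. -/
inductive AdjSwap {α : Type} (J : α → α → Prop) : List α → List α → Prop
  | swap (x y : List α) {a b : α} : J a b → AdjSwap J (x ++ a :: b :: y) (x ++ b :: a :: y)

/-- Trace equivalence: finitely many swaps of adjacent independent letters. -/
def TraceEquiv {α : Type} (J : α → α → Prop) : List α → List α → Prop :=
  Relation.ReflTransGen (AdjSwap J)

/-- Trace closure of a language with respect to letter-independence `J`. -/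
def traceClosure {α : Type} (J : α → α → Prop) (L : Set (List α)) : Set (List α) :=
  {w | ∃ v ∈ L, TraceEquiv J v w}

/-- The class of trace closures of context-free languages. -/
def IsTraceCFL {α : Type} (L : Set (List α)) : Prop :=
  ∃ J : α → α → Prop, (∀ a b, J a b → J b a) ∧ (∀ a, ¬ J a a) ∧
    ∃ L₀ : Language α, L₀.IsContextFree ∧ traceClosure J L₀ = L

/-- `listPow s m` is the word `s^m`. -/
def listPow {α : Type} (s : List α) (m : ℕ) : List α :=
  (List.replicate m s).flatten

/-- The shuffle-pumping condition. -/
def ShufflePumping {α : Type} (L : Set (List α)) : Prop :=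
  ∃ N : ℕ, ∀ w ∈ L, w.length > N →
    ∃ x y z s t : List α,
      (∃ yt u : List α, IsInterleaving y t yt ∧ IsInterleaving (s ++ yt) z u ∧ w = x ++ u) ∧
      1 ≤ s.length ∧ (s ++ y ++ t).length ≤ N ∧
      ∀ m : ℕ, x ++ listPow s m ++ y ++ listPow t m ++ z ∈ L

/-- The concatenation-pumping condition. -/
def ConcatPumping {α : Type} (L : Set (List α)) : Prop :=
  ∃ N : ℕ, ∀ w ∈ L, w.length > N →
    ∃ x y z s t : List α,
      w = x ++ y ++ z ∧
      1 ≤ (s ++ t).length ∧ (s ++ t).length ≤ N ∧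
      ∀ m : ℕ, x ++ listPow s m ++ y ++ listPow t m ++ z ∈ L

/-!
A nonterminal is *recursive* if it reproduces itself through productions whose right-hand sides
generate some word. Non-recursive nonterminals can be weighted so that every production decreases
the total weight, so a derivation which never expands a recursive nonterminal produces a word of
length at most the weight of the initial nonterminal. A longer word is derived through some
recursive `X`, and it suffices to pump there.

For a PA-grammar, filling the sibling terms on the path from `X` back to `X` with fixed words gives
`X →* s X t`, which can be iterated around any word of `X`. For a PC-grammar with transitive
dependence, the nonterminals independent of `X` can be brought in front of `X` and consumed, which
gives `X →* s X γ` with `γ` dependent on `X`. In a given derivation from `X β`, the iterated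
block `γ^m` is inserted right after `X`: since dependence is an equivalence relation, each swap
across the place of insertion involves a nonterminal independent of the whole block, so that the
block can be carried along until everything in front of it is consumed.
-/

section Pumping

variable {α : Type} {M N : ℕ} {K K' : Set (List α)} {w v u : List α}

@[simp]
lemma listPow_zero (s : List α) : listPow s 0 = [] := by
  simp [listPow]

lemma listPow_succ (s : List α) (m : ℕ) : listPow s (m + 1) = s ++ listPow s m := by
  simp [listPow, List.replicate_succ]

lemma listPow_succ' (s : List α) (m : ℕ) : listPow s (m + 1) = listPow s m ++ s := by
  simp [listPow, List.replicate_succ']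

lemma mem_of_mem_listPow {a : α} {s : List α} {m : ℕ} (h : a ∈ listPow s m) : a ∈ s := by
  obtain ⟨l, hl, ha⟩ := List.mem_flatten.1 h
  exact List.eq_of_mem_replicate hl ▸ ha

/-- The word `w` has a pumping decomposition whose pumped words all lie in `K` and whose pumping
pair has length at most `M`. The language is a parameter, not tied to `w`, so that decompositions
can be transferred between the languages of different configurations. -/
def Pumpable (M : ℕ) (K : Set (List α)) (w : List α) : Prop :=
  ∃ x y z s t : List α, w = x ++ y ++ z ∧ 1 ≤ (s ++ t).length ∧ (s ++ t).length ≤ M ∧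
    ∀ m : ℕ, x ++ listPow s m ++ y ++ listPow t m ++ z ∈ K

lemma Pumpable.mono (h : Pumpable M K w) (hMN : M ≤ N) (hK : K ⊆ K') : Pumpable N K' w := by
  obtain ⟨x, y, z, s, t, hw, hpos, hle, hmem⟩ := h
  exact ⟨x, y, z, s, t, hw, hpos, hle.trans hMN, fun m ↦ hK (hmem m)⟩

lemma Pumpable.append_left (h : Pumpable M K w) (p : List α) (hK : ∀ v ∈ K, p ++ v ∈ K') :
    Pumpable M K' (p ++ w) := by
  obtain ⟨x, y, z, s, t, rfl, hpos, hle, hmem⟩ := h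
  exact ⟨p ++ x, y, z, s, t, by simp, hpos, hle, fun m ↦ by simpa using hK _ (hmem m)⟩

lemma Pumpable.append_right (h : Pumpable M K w) (q : List α) (hK : ∀ v ∈ K, v ++ q ∈ K') :
    Pumpable M K' (w ++ q) := by
  obtain ⟨x, y, z, s, t, rfl, hpos, hle, hmem⟩ := h
  exact ⟨x, y, z ++ q, s, t, by simp, hpos, hle, fun m ↦ by simpa using hK _ (hmem m)⟩

lemma concatPumping_of_pumpable_or_length_le {n : ℕ}
    (h : ∀ w ∈ K, Pumpable M K w ∨ w.length ≤ n) : ConcatPumping K := by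
  refine ⟨max M n, fun w hw hlen ↦ ?_⟩
  have hlong : ¬ w.length ≤ n := fun hle ↦ by omega
  exact ((h w hw).resolve_right hlong).mono (le_max_left M n) subset_rfl

lemma pumpable_mul_or_length_le {K K' : Language α} {m n : ℕ} (hw : w ∈ K) (hv : v ∈ K')
    (h : Pumpable M K w ∨ w.length ≤ m) (h' : Pumpable M K' v ∨ v.length ≤ n) :
    Pumpable M (K * K') (w ++ v) ∨ (w ++ v).length ≤ m + n := by
  rcases h with h | h
  · exact .inl (h.append_right v fun _ hK ↦ Language.append_mem_mul hK hv)
  rcases h' with h' | h'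
  · exact .inl (h'.append_left w fun _ hK ↦ Language.append_mem_mul hw hK)
  · exact .inr (by simpa using add_le_add h h')

end Pumping

section Interleaving

variable {α : Type} {a b u w v : List α}

namespace IsInterleaving

lemma symm (h : IsInterleaving w v u) : IsInterleaving v w u := by
  induction h with
  | nil => exact .nil
  | left _ ih => exact .right ih
  | right _ ih => exact .left ih

lemma append (h : IsInterleaving w v u) {w' v' u' : List α} (h' : IsInterleaving w' v' u') :
    IsInterleaving (w ++ w') (v ++ v') (u ++ u') := by
  induction h with
  | nil => exact h'
  | left _ ih => exact .left ih
  | right _ ih => exact .right ih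

lemma self_nil (w : List α) : IsInterleaving w [] w := by
  induction w with
  | nil => exact .nil
  | cons x w ih => exact .left ih

lemma append_self (w v : List α) : IsInterleaving w v (w ++ v) := by
  simpa using (self_nil w).append (self_nil v).symm

lemma eq_of_nil_right (h : IsInterleaving w [] u) : u = w := by
  induction w generalizing u with
  | nil => cases h; rfl
  | cons x w ih => cases h with | left h => rw [ih h]

lemma length_eq (h : IsInterleaving w v u) : u.length = w.length + v.length := by
  induction h with
  | nil => rfl
  | left _ ih => simp only [List.length_cons]; omega
  | right _ ih => simp only [List.length_cons]; omega

lemma assoc (h : IsInterleaving w v u) (hw : IsInterleaving a b w) :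
    ∃ c, IsInterleaving b v c ∧ IsInterleaving a c u := by
  induction h generalizing a b with
  | nil => cases hw; exact ⟨[], .nil, .nil⟩
  | left _ ih =>
    cases hw with
    | left hw => obtain ⟨c, hc, hu⟩ := ih hw; exact ⟨c, hc, .left hu⟩
    | right hw => obtain ⟨c, hc, hu⟩ := ih hw; exact ⟨_, .left hc, .right hu⟩
  | right _ ih => obtain ⟨c, hc, hu⟩ := ih hw; exact ⟨_, .right hc, .right hu⟩

lemma exists_append_of_append_left (h : IsInterleaving (a ++ b) v u) :
    ∃ v₁ v₂ u₁ u₂, v = v₁ ++ v₂ ∧ u = u₁ ++ u₂ ∧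
      IsInterleaving a v₁ u₁ ∧ IsInterleaving b v₂ u₂ := by
  generalize hw : a ++ b = w at h
  induction h generalizing a with
  | nil =>
    obtain ⟨rfl, rfl⟩ := List.append_eq_nil_iff.1 hw
    exact ⟨[], [], [], [], rfl, rfl, .nil, .nil⟩
  | @left x w v u h ih =>
    rcases List.append_eq_cons_iff.1 hw with ⟨rfl, rfl⟩ | ⟨a, rfl, rfl⟩
    · exact ⟨[], v, [], x :: u, rfl, rfl, .nil, .left h⟩
    · obtain ⟨v₁, v₂, u₁, u₂, rfl, rfl, ha, hb⟩ := ih rfl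
      exact ⟨v₁, v₂, x :: u₁, u₂, rfl, rfl, .left ha, hb⟩
  | @right x w v u _ ih =>
    obtain ⟨v₁, v₂, u₁, u₂, rfl, rfl, ha, hb⟩ := ih hw
    exact ⟨x :: v₁, v₂, x :: u₁, u₂, rfl, rfl, .right ha, hb⟩

end IsInterleaving

lemma shuffleLang_comm (K L : Set (List α)) : shuffleLang K L = shuffleLang L K := by
  ext u
  constructor <;> exact fun ⟨w, hw, v, hv, h⟩ ↦ ⟨v, hv, w, hw, h.symm⟩

lemma shuffleLang_assoc (J K L : Set (List α)) :
    shuffleLang (shuffleLang J K) L = shuffleLang J (shuffleLang K L) := by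
  ext u
  constructor
  · rintro ⟨_, ⟨a, ha, b, hb, hab⟩, c, hc, h⟩
    obtain ⟨d, hd, hu⟩ := h.assoc hab
    exact ⟨a, ha, d, ⟨b, hb, c, hc, hd⟩, hu⟩
  · rintro ⟨a, ha, _, ⟨b, hb, c, hc, hbc⟩, h⟩
    obtain ⟨d, hd, hu⟩ := h.symm.assoc hbc.symm
    exact ⟨d, ⟨a, ha, b, hb, hd.symm⟩, c, hc, hu.symm⟩

lemma shuffleLang_one (K : Set (List α)) : shuffleLang K (1 : Language α) = K := by
  ext u
  constructor
  · rintro ⟨w, hw, v, rfl, h⟩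
    exact h.eq_of_nil_right ▸ hw
  · exact fun hu ↦ ⟨u, hu, [], rfl, .self_nil u⟩

/- The letters of `v` stay at their places relative to the three factors `x`, `y`, `z` of `w`, so
that the pumped words are inserted as contiguous blocks. -/
lemma Pumpable.shuffle {M : ℕ} {K K' : Set (List α)} (h : Pumpable M K w) (hv : v ∈ K')
    (hu : IsInterleaving w v u) : Pumpable M (shuffleLang K K') u := by
  obtain ⟨x, y, z, s, t, rfl, hpos, hle, hmem⟩ := h
  obtain ⟨v', v₃, u', u₃, rfl, rfl, h', h₃⟩ := hu.exists_append_of_append_left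
  obtain ⟨v₁, v₂, u₁, u₂, rfl, rfl, h₁, h₂⟩ := h'.exists_append_of_append_left
  refine ⟨u₁, u₂, u₃, s, t, rfl, hpos, hle, fun m ↦ ⟨_, hmem m, _, hv, ?_⟩⟩
  simpa using (((h₁.append (.self_nil (listPow s m))).append h₂).append
    (.self_nil (listPow t m))).append h₃

lemma pumpable_shuffleLang_or_length_le {M m n : ℕ} {K K' : Set (List α)} (hw : w ∈ K)
    (hv : v ∈ K') (hu : IsInterleaving w v u) (h : Pumpable M K w ∨ w.length ≤ m)
    (h' : Pumpable M K' v ∨ v.length ≤ n) :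
    Pumpable M (shuffleLang K K') u ∨ u.length ≤ m + n := by
  rcases h with h | h
  · exact .inl (h.shuffle hv hu)
  rcases h' with h' | h'
  · exact .inl (shuffleLang_comm K' K ▸ h'.shuffle hw hu.symm)
  · exact .inr (hu.length_eq ▸ add_le_add h h')

end Interleaving

section Recursion

variable {V : Type*}

/-- `Y` occurs on the right-hand side of a rule for `X`. Rules are pairs of a nonterminal and the
list of nonterminals of a right-hand side; terminals and the term structure are forgotten, which
lets PC- and PA-grammars share the argument. -/
def Yields (Q : Set (V × List V)) (X Y : V) : Prop :=
  ∃ l, (X, l) ∈ Q ∧ Y ∈ l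

/-- `X` reproduces itself through at least one rule. -/
def IsRecursive (Q : Set (V × List V)) (X : V) : Prop :=
  Relation.TransGen (Yields Q) X X

lemma exists_weight_of_wellFounded {Q : Set (V × List V)} (hQ : Q.Finite) {r : V → V → Prop}
    (hr : WellFounded r) :
    ∃ φ : V → ℕ, ∀ X l, (X, l) ∈ Q → (∀ Y ∈ l, r Y X) → (l.map φ).sum < φ X := by
  classical
  let weight (X : V) (φ : ∀ Y, r Y X → ℕ) (l : List V) : ℕ :=
    (l.map fun Y ↦ if h : r Y X then φ Y h else 0).sum
  let φ : V → ℕ := hr.fix fun X φ ↦ sSup ((fun p ↦ weight X φ p.2 + 1) '' {p ∈ Q | p.1 = X})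
  refine ⟨φ, fun X l hl hlt ↦ Nat.lt_of_succ_le ?_⟩
  have hsum : weight X (fun Y _ ↦ φ Y) l = (l.map φ).sum :=
    congrArg List.sum (List.map_congr_left fun Y hY ↦ dif_pos (hlt Y hY))
  have hfix : φ X = sSup ((fun p ↦ weight X (fun Y _ ↦ φ Y) p.2 + 1) '' {p ∈ Q | p.1 = X}) :=
    hr.fix_eq _ X
  rw [← hsum, hfix]
  exact le_csSup ((hQ.subset (Set.sep_subset _ _)).image _).bddAbove ⟨(X, l), ⟨hl, rfl⟩, rfl⟩

lemma exists_weight_of_not_isRecursive [Finite V] {Q : Set (V × List V)} (hQ : Q.Finite) :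
    ∃ φ : V → ℕ, ∀ X l, (X, l) ∈ Q → ¬ IsRecursive Q X → (l.map φ).sum < φ X := by
  let r (Y X : V) : Prop := Relation.TransGen (Yields Q) X Y ∧ ¬ IsRecursive Q X
  have : IsTrans V r := ⟨fun _ _ _ hab hbc ↦ ⟨hbc.1.trans hab.1, hbc.2⟩⟩
  have : Std.Irrefl r := ⟨fun _ h ↦ h.2 h.1⟩
  obtain ⟨φ, hφ⟩ :=
    exists_weight_of_wellFounded hQ (Finite.wellFounded_of_trans_of_irrefl r)
  exact ⟨φ, fun X l hl hX ↦ hφ X l hl fun Y hY ↦ ⟨.single ⟨l, hl, hY⟩, hX⟩⟩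

end Recursion

section TraceEquivalence

variable {V : Type} {J : V → V → Prop}

lemma TraceEquiv.trans {u v w : List V} (h : TraceEquiv J u v) (h' : TraceEquiv J v w) :
    TraceEquiv J u w :=
  Relation.ReflTransGen.trans h h'

lemma traceEquiv_swap (x y : List V) {a b : V} (h : J a b) :
    TraceEquiv J (x ++ a :: b :: y) (x ++ b :: a :: y) :=
  .single (.swap x y h)

lemma TraceEquiv.append_append {v w : List V} (h : TraceEquiv J v w) (x y : List V) :
    TraceEquiv J (x ++ v ++ y) (x ++ w ++ y) := by
  refine Relation.ReflTransGen.lift (fun v ↦ x ++ v ++ y) (fun _ _ hswap ↦ ?_) _ _ h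
  obtain ⟨v₁, v₂, hab⟩ := hswap
  simpa [Function.onFun] using AdjSwap.swap (x ++ v₁) (v₂ ++ y) hab

lemma traceEquiv_cons_comm {a : V} {l : List V} (h : ∀ b ∈ l, J a b) :
    TraceEquiv J (a :: l) (l ++ [a]) := by
  induction l with
  | nil => exact .refl
  | cons b l ih =>
    have hswap : TraceEquiv J (a :: b :: l) (b :: a :: l) :=
      traceEquiv_swap [] l (h b List.mem_cons_self)
    have hrest := (ih fun c hc ↦ h c (List.mem_cons_of_mem b hc)).append_append [b] []
    exact hswap.trans (by simpa using hrest)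

lemma traceEquiv_append_comm {l l' : List V} (h : ∀ a ∈ l, ∀ b ∈ l', J a b) :
    TraceEquiv J (l ++ l') (l' ++ l) := by
  induction l with
  | nil => rw [List.nil_append, List.append_nil]; exact .refl
  | cons a l ih =>
    have htail := (ih fun b hb ↦ h b (List.mem_cons_of_mem a hb)).append_append [a] []
    have hhead := (traceEquiv_cons_comm (h a List.mem_cons_self)).append_append [] l
    have hhead' : TraceEquiv J (a :: (l' ++ l)) (l' ++ a :: l) := by simpa using hhead
    exact TraceEquiv.trans (by simpa using htail) hhead'

lemma traceEquiv_filter_append_filter_not (p : V → Bool) {l : List V}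
    (h : ∀ a ∈ l, ∀ b ∈ l, ¬ p a → p b → J a b) :
    TraceEquiv J l (l.filter p ++ l.filter (!p ·)) := by
  induction l with
  | nil => exact .refl
  | cons a l ih =>
    have htail := (ih fun b hb c hc ↦
      h b (List.mem_cons_of_mem a hb) c (List.mem_cons_of_mem a hc)).append_append [a] []
    by_cases ha : p a
    · simpa [ha] using htail
    · have hhead : TraceEquiv J (a :: l.filter p) (l.filter p ++ [a]) :=
        traceEquiv_cons_comm fun b hb ↦ h a List.mem_cons_self b
          (List.mem_cons_of_mem a (List.mem_of_mem_filter hb)) ha (List.of_mem_filter hb)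
      have := hhead.append_append [] (l.filter (!p ·))
      exact TraceEquiv.trans (by simpa using htail) (by simpa [ha] using this)

end TraceEquivalence

section PCGrammar

variable {α : Type} {G : PCGrammar α} {X Y c : G.V} {β γ δ δ' η : List G.V} {s t u w : List α}

namespace PCDerives

lemma append (h : PCDerives G δ u) (h' : PCDerives G β w) : PCDerives G (δ ++ β) (u ++ w) := by
  induction h with
  | nil => exact h'
  | prod hp _ ih => exact .prod hp (by simpa using ih)
  | swap hi _ ih => simpa using PCDerives.swap hi (by simpa using ih)

lemma of_traceEquiv (h : PCDerives G δ' w) (hδ : TraceEquiv G.indep δ δ') :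
    PCDerives G δ w := by
  induction hδ using Relation.ReflTransGen.head_induction_on with
  | refl => exact h
  | head hswap _ ih =>
    obtain ⟨x, y, hi⟩ := hswap
    exact .swap hi ih

protected lemma listPow (h : PCDerives G γ t) (m : ℕ) :
    PCDerives G (listPow γ m) (listPow t m) := by
  induction m with
  | zero => exact .nil
  | succ m ih => simpa only [listPow_succ] using h.append ih

end PCDerives

namespace PCGrammar

/-- The configuration `δ` derives some word. -/
def Productive (G : PCGrammar α) (δ : List G.V) : Prop :=
  ∃ w, PCDerives G δ w

lemma Productive.append (hδ : G.Productive δ) (hβ : G.Productive β) :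
    G.Productive (δ ++ β) :=
  let ⟨_, hu⟩ := hδ
  let ⟨_, hw⟩ := hβ
  ⟨_, hu.append hw⟩

lemma productive_of_forall_mem (h : ∀ X ∈ δ, G.Productive [X]) : G.Productive δ := by
  induction δ with
  | nil => exact ⟨[], .nil⟩
  | cons X δ ih =>
    exact (h X List.mem_cons_self).append (ih fun Y hY ↦ h Y (List.mem_cons_of_mem X hY))

lemma Productive.singleton_of_mem (h : G.Productive δ) : ∀ X ∈ δ, G.Productive [X] := by
  obtain ⟨w, h⟩ := h
  induction h with
  | nil => simp
  | @prod X a γ β _ hp _ ih =>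
    rw [List.forall_mem_append] at ih
    obtain ⟨u, hu⟩ := productive_of_forall_mem ih.1
    exact List.forall_mem_cons.2 ⟨⟨a :: u, .prod hp (by simpa using hu)⟩, ih.2⟩
  | swap _ _ ih => exact fun Z hZ ↦ ih Z (by simpa [or_left_comm] using hZ)

lemma Productive.of_subset (h : G.Productive δ) (hβ : β ⊆ δ) : G.Productive β :=
  productive_of_forall_mem fun X hX ↦ h.singleton_of_mem X (hβ hX)

/-- The productions of `G` with a productive right-hand side, without their letters. -/
def rules (G : PCGrammar α) : Set (G.V × List G.V) :=
  {p | ∃ a, (p.1, a, p.2) ∈ G.prods ∧ G.Productive p.2}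

lemma finite_rules (G : PCGrammar α) : G.rules.Finite := by
  refine (G.finP.image fun p ↦ (p.1, p.2.2)).subset ?_
  rintro ⟨X, l⟩ ⟨a, h, -⟩
  exact ⟨(X, a, l), h, rfl⟩

/-- `δ` can produce `s` and turn into `δ'`, in front of every configuration. This is stated through
the words derived afterwards, which avoids a separate reachability relation between
configurations. -/
def Emits (G : PCGrammar α) (δ : List G.V) (s : List α) (δ' : List G.V) : Prop :=
  ∀ β w, PCDerives G (δ' ++ β) w → PCDerives G (δ ++ β) (s ++ w)

lemma Emits.trans {δ'' : List G.V} (h : G.Emits δ s δ') (h' : G.Emits δ' t δ'') :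
    G.Emits δ (s ++ t) δ'' :=
  fun β w hw ↦ by simpa using h _ _ (h' β w hw)

lemma Emits.append_right (h : G.Emits δ s δ') (γ : List G.V) : G.Emits (δ ++ γ) s (δ' ++ γ) :=
  fun β w hw ↦ by simpa using h (γ ++ β) w (by simpa using hw)

lemma emits_of_mem_prods {a : α} (h : (X, a, γ) ∈ G.prods) : G.Emits [X] [a] γ :=
  fun _ _ hw ↦ .prod h hw

lemma emits_of_derives (h : PCDerives G δ u) (γ : List G.V) : G.Emits (δ ++ γ) u γ :=
  fun _ _ hw ↦ by simpa using h.append hw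

lemma emits_of_traceEquiv (h : TraceEquiv G.indep δ δ') : G.Emits δ [] δ' :=
  fun β _ hw ↦ hw.of_traceEquiv (h.append_append [] β)

lemma Emits.listPow (h : G.Emits [X] s (X :: γ)) (m : ℕ) :
    G.Emits [X] (listPow s m) (X :: listPow γ m) := by
  induction m with
  | zero => exact fun _ _ hw ↦ by simpa using hw
  | succ m ih =>
    rw [listPow_succ, listPow_succ']
    exact h.trans (ih.append_right γ)

lemma depTransitive.indep_of_not_indep (hG : G.depTransitive) (hX : ¬ G.indep c X)
    (hY : G.indep c Y) : G.indep X Y :=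
  by_contra fun h ↦ hG c X Y hX h hY

lemma depTransitive.traceEquiv_cons_filter [DecidablePred (G.indep Y)] (hG : G.depTransitive)
    (γ : List G.V) :
    TraceEquiv G.indep (Y :: γ) (γ.filter (G.indep Y ·) ++ Y :: γ.filter (¬ G.indep Y ·)) := by
  have := traceEquiv_filter_append_filter_not (J := G.indep) (l := Y :: γ) (G.indep Y ·)
    fun a _ b _ ha hb ↦ hG.indep_of_not_indep (by simpa using ha) (by simpa using hb)
  simpa [G.indep_irrefl Y] using this

lemma depTransitive.exists_emits_of_yields (hG : G.depTransitive) (hXY : Yields G.rules X Y)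
    (hγ : G.Productive γ) :
    ∃ s γ', s ≠ [] ∧ G.Emits (X :: γ) s (Y :: γ') ∧ (∀ Z ∈ γ', ¬ G.indep Y Z) ∧
      G.Productive γ' := by
  classical
  obtain ⟨l, ⟨a, hl, hprod⟩, hY⟩ := hXY
  obtain ⟨l₁, l₂, rfl⟩ := List.append_of_mem hY
  obtain ⟨u₁, hu₁⟩ : G.Productive l₁ := hprod.of_subset (by simp)
  have hrest : G.Productive (l₂ ++ γ) := (hprod.of_subset (by simp)).append hγ
  obtain ⟨u₂, hu₂⟩ : G.Productive ((l₂ ++ γ).filter (G.indep Y ·)) :=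
    hrest.of_subset (List.filter_subset_self _)
  refine ⟨[a] ++ (u₁ ++ ([] ++ u₂)), (l₂ ++ γ).filter (¬ G.indep Y ·), by simp, ?_,
    fun Z hZ ↦ by simpa using List.of_mem_filter hZ,
    hrest.of_subset (List.filter_subset_self _)⟩
  have hexpand : G.Emits (X :: γ) [a] (l₁ ++ Y :: (l₂ ++ γ)) := by
    simpa using (emits_of_mem_prods hl).append_right γ
  have hsort := emits_of_traceEquiv (hG.traceEquiv_cons_filter (Y := Y) (l₂ ++ γ))
  exact hexpand.trans ((emits_of_derives hu₁ _).trans (hsort.trans (emits_of_derives hu₂ _)))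

lemma depTransitive.exists_emits_of_transGen_yields (hG : G.depTransitive)
    (hXY : Relation.TransGen (Yields G.rules) X Y) :
    ∃ s γ, s ≠ [] ∧ G.Emits [X] s (Y :: γ) ∧ (∀ Z ∈ γ, ¬ G.indep Y Z) ∧ G.Productive γ := by
  induction hXY with
  | single h => exact hG.exists_emits_of_yields h ⟨[], .nil⟩
  | tail _ h ih =>
    obtain ⟨s, γ, hs, hXY, -, hγ⟩ := ih
    obtain ⟨s', γ', -, hYZ, hdep, hγ'⟩ := hG.exists_emits_of_yields h hγ
    exact ⟨s ++ s', γ', by simp [hs], hXY.trans hYZ, hdep, hγ'⟩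

/-- The word `w` splits in such a way that every block of nonterminals dependent on `c` can be
inserted between the configurations `δ` and `β`, the words of the block being then inserted between
the two parts of `w`. -/
def AdmitsInsertion (G : PCGrammar α) (c : G.V) (δ β : List G.V) (w : List α) : Prop :=
  ∃ y z, w = y ++ z ∧ ∀ γ t, (∀ Z ∈ γ, ¬ G.indep c Z) → PCDerives G γ t →
    PCDerives G (δ ++ γ ++ β) (y ++ t ++ z)

lemma admitsInsertion_nil (h : PCDerives G β w) : G.AdmitsInsertion c [] β w :=
  ⟨[], w, rfl, fun _ _ _ hγ ↦ hγ.append h⟩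

lemma AdmitsInsertion.cons {a : α} (hp : (X, a, γ) ∈ G.prods)
    (h : G.AdmitsInsertion c (γ ++ δ) β w) : G.AdmitsInsertion c (X :: δ) β (a :: w) := by
  obtain ⟨y, z, rfl, hyz⟩ := h
  exact ⟨a :: y, z, rfl, fun γ t hdep hγ ↦ .prod hp (by simpa using hyz γ t hdep hγ)⟩

lemma AdmitsInsertion.of_traceEquiv {β' : List G.V} (h : G.AdmitsInsertion c δ' β' w)
    (hδβ : ∀ γ, (∀ Z ∈ γ, ¬ G.indep c Z) →
      TraceEquiv G.indep (δ ++ γ ++ β) (δ' ++ γ ++ β')) : G.AdmitsInsertion c δ β w := by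
  obtain ⟨y, z, rfl, hyz⟩ := h
  exact ⟨y, z, rfl, fun γ t hdep hγ ↦ (hyz γ t hdep hγ).of_traceEquiv (hδβ γ hdep)⟩

lemma traceEquiv_swap_around_left (hXY : G.indep X Y) (hX : ∀ Z ∈ γ, G.indep Z X) :
    TraceEquiv G.indep (η ++ [X] ++ γ ++ Y :: β) (η ++ γ ++ Y :: X :: β) := by
  have hmove : TraceEquiv G.indep ([X] ++ γ) (γ ++ [X]) :=
    traceEquiv_append_comm (by simpa using fun Z hZ ↦ G.indep_symm (hX Z hZ))
  have := hmove.append_append η (Y :: β)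
  exact TraceEquiv.trans (by simpa using this) (traceEquiv_swap (η ++ γ) β hXY)

lemma traceEquiv_swap_around_right (hXY : G.indep X Y) (hY : ∀ Z ∈ γ, G.indep Z Y) :
    TraceEquiv G.indep (η ++ [X] ++ γ ++ Y :: β) (η ++ [Y, X] ++ γ ++ β) := by
  have hmove : TraceEquiv G.indep (γ ++ [Y]) ([Y] ++ γ) :=
    traceEquiv_append_comm (by simpa using hY)
  have := hmove.append_append (η ++ [X]) β
  exact TraceEquiv.trans (by simpa using this) (by simpa using traceEquiv_swap η (γ ++ β) hXY)

/- At most one of `X` and `Y` depends on `c`, hence on the inserted block; the place of insertion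
follows that one when `X` and `Y` are swapped. -/
lemma depTransitive.admitsInsertion_swap_across (hG : G.depTransitive) (hXY : G.indep X Y)
    (hleft : G.AdmitsInsertion c η (Y :: X :: β) w)
    (hright : G.AdmitsInsertion c (η ++ [Y, X]) β w) :
    G.AdmitsInsertion c (η ++ [X]) (Y :: β) w := by
  by_cases hX : G.indep c X
  · exact hleft.of_traceEquiv fun γ hγ ↦ traceEquiv_swap_around_left hXY fun Z hZ ↦
      hG.indep_of_not_indep (hγ Z hZ) hX
  · have hY : G.indep c Y := hG.indep_of_not_indep (fun h ↦ hX (G.indep_symm h)) hXY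
    exact hright.of_traceEquiv fun γ hγ ↦ traceEquiv_swap_around_right hXY fun Z hZ ↦
      hG.indep_of_not_indep (hγ Z hZ) hY

end PCGrammar

lemma append_cons_cons_eq_append {V : Type*} {η θ δ β : List V} {X Y : V}
    (h : η ++ X :: Y :: θ = δ ++ β) :
    (∃ r, η = δ ++ r ∧ β = r ++ X :: Y :: θ) ∨ (δ = η ++ [X] ∧ β = Y :: θ) ∨
      ∃ r, δ = η ++ X :: Y :: r ∧ θ = r ++ β := by
  rcases List.append_eq_append_iff.1 h with ⟨r, rfl, hr⟩ | ⟨r, hη, hβ⟩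
  · match r, hr with
    | [], hr => exact .inl ⟨[], by simp, by simpa using hr.symm⟩
    | [Z], hr =>
      obtain ⟨rfl, rfl⟩ : X = Z ∧ Y :: θ = β := by simpa using hr
      exact .inr (.inl ⟨rfl, rfl⟩)
    | Z :: W :: r, hr =>
      obtain ⟨rfl, rfl, rfl⟩ : X = Z ∧ Y = W ∧ θ = r ++ β := by simpa using hr
      exact .inr (.inr ⟨r, rfl, rfl⟩)
  · exact .inl ⟨r, hη, hβ⟩

lemma PCDerives.admitsInsertion (hG : G.depTransitive) (c : G.V) {θ : List G.V}
    (h : PCDerives G θ w) (hθ : θ = δ ++ β) : G.AdmitsInsertion c δ β w := by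
  induction h generalizing δ β with
  | nil =>
    obtain ⟨rfl, rfl⟩ := List.append_eq_nil_iff.1 hθ.symm
    exact PCGrammar.admitsInsertion_nil .nil
  | prod hp hd ih =>
    rcases List.append_eq_cons_iff.1 hθ.symm with ⟨rfl, rfl⟩ | ⟨δ, rfl, rfl⟩
    · exact PCGrammar.admitsInsertion_nil (.prod hp hd)
    · exact (ih (by simp)).cons hp
  | @swap η θ X Y w hi hd ih =>
    rcases append_cons_cons_eq_append hθ with ⟨r, rfl, rfl⟩ | ⟨rfl, rfl⟩ | ⟨r, rfl, rfl⟩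
    · refine (ih (δ := δ) (β := r ++ Y :: X :: θ) (by simp)).of_traceEquiv fun γ _ ↦ ?_
      simpa using traceEquiv_swap (δ ++ γ ++ r) θ hi
    · exact hG.admitsInsertion_swap_across hi (ih rfl) (ih (by simp))
    · refine (ih (δ := η ++ Y :: X :: r) (β := β) (by simp)).of_traceEquiv fun γ _ ↦ ?_
      simpa using traceEquiv_swap η (r ++ γ ++ β) hi

namespace PCGrammar

lemma depTransitive.exists_pumpable_of_isRecursive (hG : G.depTransitive)
    (hX : IsRecursive G.rules X) :
    ∃ M, ∀ β w, PCDerives G (X :: β) w → Pumpable M {v | PCDerives G (X :: β) v} w := by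
  obtain ⟨s, γ, hs, hemits, hdep, t, ht⟩ := hG.exists_emits_of_transGen_yields hX
  refine ⟨(s ++ t).length, fun β w hw ↦ ?_⟩
  obtain ⟨y, z, rfl, hyz⟩ := hw.admitsInsertion hG X (δ := [X]) rfl
  refine ⟨[], y, z, s, t, rfl, ?_, le_rfl, fun m ↦ ?_⟩
  · exact List.length_pos_iff.2 (by simp [hs])
  · have hinsert := hyz _ _ (fun Z hZ ↦ hdep Z (mem_of_mem_listPow hZ)) (ht.listPow m)
    simpa using hemits.listPow m β _ (by simpa using hinsert)

lemma depTransitive.exists_forall_pumpable_of_isRecursive (hG : G.depTransitive) :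
    ∃ M, ∀ X, IsRecursive G.rules X → ∀ β w, PCDerives G (X :: β) w →
      Pumpable M {v | PCDerives G (X :: β) v} w := by
  have := G.finV
  choose! M hM using fun X ↦ hG.exists_pumpable_of_isRecursive (X := X)
  obtain ⟨N, hN⟩ := Finite.exists_le M
  exact ⟨N, fun X hX β w hw ↦ (hM X hX β w hw).mono (hN X) subset_rfl⟩

end PCGrammar

lemma PCDerives.pumpable_or_length_le {M : ℕ} {φ : G.V → ℕ}
    (hM : ∀ X, IsRecursive G.rules X → ∀ β w, PCDerives G (X :: β) w →
      Pumpable M {v | PCDerives G (X :: β) v} w)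
    (hφ : ∀ X l, (X, l) ∈ G.rules → ¬ IsRecursive G.rules X → (l.map φ).sum < φ X)
    (h : PCDerives G δ w) :
    Pumpable M {v | PCDerives G δ v} w ∨ w.length ≤ (δ.map φ).sum := by
  induction h with
  | nil => exact .inr le_rfl
  | @prod X a γ β w hp hd ih =>
    by_cases hX : IsRecursive G.rules X
    · exact .inl (hM X hX β _ (.prod hp hd))
    · refine ih.imp (fun ih ↦ ih.append_left [a] fun v hv ↦ .prod hp hv) fun ih ↦ ?_
      have hγ : G.Productive γ := .of_subset ⟨w, hd⟩ (List.subset_append_left γ β)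
      have := hφ X γ ⟨a, hp, hγ⟩ hX
      simp only [List.map_append, List.sum_append, List.map_cons, List.sum_cons,
        List.length_cons] at ih ⊢
      omega
  | swap hi _ ih =>
    refine ih.imp (fun ih ↦ ih.mono le_rfl fun v hv ↦ .swap hi hv) fun ih ↦ ?_
    simpa [add_left_comm] using ih

theorem PCGrammar.depTransitive.concatPumping_lang (hG : G.depTransitive) :
    ConcatPumping G.lang := by
  have := G.finV
  obtain ⟨φ, hφ⟩ := exists_weight_of_not_isRecursive G.finite_rules
  obtain ⟨M, hM⟩ := hG.exists_forall_pumpable_of_isRecursive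
  exact concatPumping_of_pumpable_or_length_le fun w hw ↦
    PCDerives.pumpable_or_length_le hM hφ hw

end PCGrammar

section PAGrammar

variable {V α : Type} {P : Set (V × α × PATerm V)} {X Y : V} {t t' u : PATerm V}
  {w v x : List α} {a : α}

/-- Compositional generation of words by terms: a derivation tree in place of a sequence of steps
up to structural equivalence. -/
inductive PADerives (P : Set (V × α × PATerm V)) : PATerm V → List α → Prop
  | eps : PADerives P .eps []
  | var {X : V} {a : α} {t : PATerm V} {w : List α} :
      (X, a, t) ∈ P → PADerives P t w → PADerives P (.var X) (a :: w)
  | seq {t u : PATerm V} {w v : List α} :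
      PADerives P t w → PADerives P u v → PADerives P (t.seq u) (w ++ v)
  | par {t u : PATerm V} {w v x : List α} :
      PADerives P t w → PADerives P u v → IsInterleaving w v x → PADerives P (t.par u) x

/-- The language of a term. -/
def paLang (P : Set (V × α × PATerm V)) (t : PATerm V) : Language α :=
  {w | PADerives P t w}

lemma paLang_eps : paLang P .eps = 1 := by
  ext w
  exact ⟨fun h ↦ by cases h; rfl, fun h ↦ h ▸ PADerives.eps⟩

lemma paLang_seq (t u : PATerm V) : paLang P (t.seq u) = paLang P t * paLang P u := by
  ext w
  constructor
  · rintro (_ | _ | ⟨ht, hu⟩)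
    exact Language.append_mem_mul ht hu
  · rintro ⟨w, ht, v, hu, rfl⟩
    exact .seq ht hu

lemma paLang_par (t u : PATerm V) :
    paLang P (t.par u) = shuffleLang (paLang P t) (paLang P u) := by
  ext x
  constructor
  · rintro (_ | _ | _ | ⟨ht, hu, hx⟩)
    exact ⟨_, ht, _, hu, hx⟩
  · rintro ⟨w, ht, v, hu, hx⟩
    exact .par ht hu hx

lemma PAEq.paLang_eq (h : PAEq t t') : paLang P t = paLang P t' := by
  induction h with
  | refl => rfl
  | symm _ ih => exact ih.symm
  | trans _ _ ih ih' => exact ih.trans ih'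
  | seq_assoc => simp only [paLang_seq, mul_assoc]
  | par_assoc => simp only [paLang_par]; exact shuffleLang_assoc ..
  | par_comm => simp only [paLang_par]; exact shuffleLang_comm ..
  | seq_eps_left => simp only [paLang_seq, paLang_eps, one_mul]
  | seq_eps_right => simp only [paLang_seq, paLang_eps, mul_one]
  | par_eps => rw [paLang_par, paLang_eps]; exact shuffleLang_one _
  | seq_congr _ _ ih ih' => simp only [paLang_seq, ih, ih']
  | par_congr _ _ ih ih' => rw [paLang_par, paLang_par, ih, ih']

lemma PADerives.of_step (h : PAStep P t a t') (hw : PADerives P t' w) :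
    PADerives P t (a :: w) := by
  induction h generalizing w with
  | prod h => exact .var h hw
  | seq_left _ ih => cases hw with | seq ht hu => exact .seq (ih ht) hu
  | par_left _ ih => cases hw with | par ht hu hx => exact .par (ih ht) hu hx.left
  | par_right _ ih => cases hw with | par ht hu hx => exact .par ht (ih hu) hx.right

lemma PAGen.paDerives (h : PAGen P t w) : PADerives P t w := by
  induction h with
  | done => exact .eps
  | eqv h _ ih => exact (congrArg (_ ∈ ·) h.paLang_eq).mpr ih
  | step h _ ih => exact ih.of_step h

lemma PAGen.append (h : PAGen P t w) (h' : PAGen P u v) : PAGen P (t.seq u) (w ++ v) := by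
  induction h with
  | done => exact .eqv (.seq_eps_left u) h'
  | eqv h _ ih => exact .eqv (.seq_congr h (.refl u)) ih
  | step h _ ih => exact .step (.seq_left h) ih

lemma PAGen.par_of_nil (h : PAGen P t []) (h' : PAGen P u v) : PAGen P (t.par u) v := by
  generalize hw : ([] : List α) = w at h
  induction h with
  | done => exact .eqv (.trans (.par_comm _ _) (.par_eps u)) h'
  | eqv h _ ih => exact .eqv (.par_congr h (.refl u)) (ih hw)
  | step => cases hw

lemma PAGen.par_cons (h : PAGen P t (a :: w))
    (hx : ∀ t', PAGen P t' w → PAGen P (t'.par u) x) : PAGen P (t.par u) (a :: x) := by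
  generalize hw : a :: w = v at h
  induction h with
  | done => cases hw
  | eqv h _ ih => exact .eqv (.par_congr h (.refl u)) (ih hw)
  | step h ht' _ =>
    cases hw
    exact .step (.par_left h) (hx _ ht')

lemma PAGen.interleave (h : PAGen P t w) (h' : PAGen P u v) (hx : IsInterleaving w v x) :
    PAGen P (t.par u) x := by
  induction hx generalizing t u with
  | nil => exact h.par_of_nil h'
  | left _ ih => exact h.par_cons fun _ ht ↦ ih ht h'
  | right _ ih =>
    exact .eqv (.par_comm t u) (h'.par_cons fun _ hu ↦ .eqv (.par_comm _ _) (ih h hu))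

lemma PADerives.paGen (h : PADerives P t w) : PAGen P t w := by
  induction h with
  | eps => exact .done
  | var h _ ih => exact .step (.prod h) ih
  | seq _ _ ih ih' => exact ih.append ih'
  | par _ _ hx ih ih' => exact ih.interleave ih' hx

lemma paGen_iff_paDerives : PAGen P t w ↔ PADerives P t w :=
  ⟨PAGen.paDerives, PADerives.paGen⟩

/-- The occurrences of nonterminals in a term, from left to right. -/
def PATerm.vars : PATerm V → List V
  | .eps => []
  | .var X => [X]
  | .seq t u => t.vars ++ u.vars
  | .par t u => t.vars ++ u.vars

/-- The productions in `P` whose right-hand side generates some word, reduced to the nonterminals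
of the right-hand side. -/
def paRules (P : Set (V × α × PATerm V)) : Set (V × List V) :=
  {p | ∃ a t w, (p.1, a, t) ∈ P ∧ PADerives P t w ∧ t.vars = p.2}

lemma finite_paRules (hP : P.Finite) : (paRules P).Finite := by
  refine (hP.image fun p ↦ (p.1, p.2.2.vars)).subset ?_
  rintro ⟨X, l⟩ ⟨a, t, w, h, -, rfl⟩
  exact ⟨(X, a, t), h, rfl⟩

/- Parallel siblings of the chosen occurrence of `Y` are run to completion before or after it, just
as sequential ones. -/
lemma PADerives.exists_context (h : PADerives P t w) (hY : Y ∈ t.vars) :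
    ∃ p q, ∀ v, PADerives P (.var Y) v → PADerives P t (p ++ v ++ q) := by
  induction t generalizing w with
  | eps => cases hY
  | var X =>
    obtain rfl := List.mem_singleton.1 hY
    exact ⟨[], [], fun v hv ↦ by simpa using hv⟩
  | seq t u iht ihu =>
    obtain _ | _ | @⟨_, _, wt, wu, ht, hu⟩ := h
    rcases List.mem_append.1 hY with hY | hY
    · obtain ⟨p, q, hpq⟩ := iht ht hY
      exact ⟨p, q ++ wu, fun v hv ↦ by simpa using (hpq v hv).seq hu⟩
    · obtain ⟨p, q, hpq⟩ := ihu hu hY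
      exact ⟨wt ++ p, q, fun v hv ↦ by simpa using ht.seq (hpq v hv)⟩
  | par t u iht ihu =>
    obtain _ | _ | _ | @⟨_, _, wt, wu, _, ht, hu, -⟩ := h
    rcases List.mem_append.1 hY with hY | hY
    · obtain ⟨p, q, hpq⟩ := iht ht hY
      exact ⟨p, q ++ wu, fun v hv ↦ by simpa using (hpq v hv).par hu (.append_self _ _)⟩
    · obtain ⟨p, q, hpq⟩ := ihu hu hY
      exact ⟨wt ++ p, q, fun v hv ↦ by simpa using ht.par (hpq v hv) (.append_self _ _)⟩

lemma exists_paDerives_var_of_yields (h : Yields (paRules P) X Y) :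
    ∃ p q : List α, p ≠ [] ∧
      ∀ v, PADerives P (.var Y) v → PADerives P (.var X) (p ++ v ++ q) := by
  obtain ⟨_, ⟨a, t, w, hP, ht, rfl⟩, hY⟩ := h
  obtain ⟨p, q, hpq⟩ := ht.exists_context hY
  exact ⟨a :: p, q, by simp, fun v hv ↦ .var hP (hpq v hv)⟩

lemma exists_paDerives_var_of_transGen_yields (h : Relation.TransGen (Yields (paRules P)) X Y) :
    ∃ p q : List α, p ≠ [] ∧
      ∀ v, PADerives P (.var Y) v → PADerives P (.var X) (p ++ v ++ q) := by
  induction h with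
  | single h => exact exists_paDerives_var_of_yields h
  | tail _ h ih =>
    obtain ⟨p, q, hp, hpq⟩ := ih
    obtain ⟨p', q', -, hpq'⟩ := exists_paDerives_var_of_yields h
    exact ⟨p ++ p', q' ++ q, by simp [hp], fun v hv ↦ by simpa using hpq _ (hpq' v hv)⟩

lemma exists_pumpable_of_isRecursive_paRules (hX : IsRecursive (paRules P) X) :
    ∃ M, ∀ w, PADerives P (.var X) w → Pumpable M (paLang P (.var X)) w := by
  obtain ⟨s, t, hs, hst⟩ := exists_paDerives_var_of_transGen_yields hX
  refine ⟨(s ++ t).length, fun w hw ↦ ⟨[], w, [], s, t, by simp, ?_, le_rfl, fun m ↦ ?_⟩⟩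
  · exact List.length_pos_iff.2 (by simp [hs])
  · change PADerives P (.var X) _
    simp only [List.nil_append, List.append_nil]
    induction m with
    | zero => simpa using hw
    | succ m ih => simpa [listPow_succ s, listPow_succ' t] using hst _ ih

lemma exists_forall_pumpable_of_isRecursive_paRules [Finite V] (P : Set (V × α × PATerm V)) :
    ∃ M, ∀ X, IsRecursive (paRules P) X → ∀ w, PADerives P (.var X) w →
      Pumpable M (paLang P (.var X)) w := by
  choose! M hM using fun X ↦ exists_pumpable_of_isRecursive_paRules (P := P) (X := X)
  obtain ⟨N, hN⟩ := Finite.exists_le M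
  exact ⟨N, fun X hX w hw ↦ (hM X hX w hw).mono (hN X) subset_rfl⟩

lemma PADerives.pumpable_or_length_le {M : ℕ} {φ : V → ℕ}
    (hM : ∀ X, IsRecursive (paRules P) X → ∀ w, PADerives P (.var X) w →
      Pumpable M (paLang P (.var X)) w)
    (hφ : ∀ X l, (X, l) ∈ paRules P → ¬ IsRecursive (paRules P) X → (l.map φ).sum < φ X)
    (h : PADerives P t w) :
    Pumpable M (paLang P t) w ∨ w.length ≤ (t.vars.map φ).sum := by
  induction h with
  | eps => exact .inr le_rfl
  | @var X a t w hp hd ih =>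
    by_cases hX : IsRecursive (paRules P) X
    · exact .inl (hM X hX _ (.var hp hd))
    · refine ih.imp (fun ih ↦ ih.append_left [a] fun v hv ↦ .var hp hv) fun ih ↦ ?_
      have hlt := hφ X t.vars ⟨a, t, w, hp, hd, rfl⟩ hX
      simpa [PATerm.vars] using ih.trans_lt hlt
  | seq ht hu iht ihu =>
    rw [paLang_seq, PATerm.vars, List.map_append, List.sum_append]
    exact pumpable_mul_or_length_le ht hu iht ihu
  | par ht hu hx iht ihu =>
    rw [paLang_par, PATerm.vars, List.map_append, List.sum_append]
    exact pumpable_shuffleLang_or_length_le ht hu hx iht ihu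

theorem PAGrammar.concatPumping_lang (G : PAGrammar α) : ConcatPumping G.lang := by
  have := G.finV
  have hlang : G.lang = paLang G.prods (.var G.start) := Set.ext fun _ ↦ paGen_iff_paDerives
  obtain ⟨φ, hφ⟩ := exists_weight_of_not_isRecursive (finite_paRules G.finP)
  obtain ⟨M, hM⟩ := exists_forall_pumpable_of_isRecursive_paRules G.prods
  rw [hlang]
  exact concatPumping_of_pumpable_or_length_le fun w hw ↦
    PADerives.pumpable_or_length_le hM hφ hw

end PAGrammar

theorem concat_pumping_of_trpccfl_or_shufflecfl_general {α : Type} {L : Set (List α)}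
    (hL : IsTrPCCFL L ∨ IsShuffleCFL L) : ConcatPumping L := by
  rcases hL with ⟨G, hG, rfl⟩ | ⟨G, rfl⟩
  · exact hG.concatPumping_lang
  · exact G.concatPumping_lang

/-- every language in trPCCFL ∪ shuffleCFL satisfies concatenation pumping. -/
theorem concat_pumping_of_trpccfl_or_shufflecfl (α : Type) [Finite α]
    (L : Set (List α)) (hL : IsTrPCCFL L ∨ IsShuffleCFL L) :
    ConcatPumping L :=
  concat_pumping_of_trpccfl_or_shufflecfl_general hL
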